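/- Let K be an algebraically closed field, let n >= 1, let z in FPF_n(I_n), and let (p,q) be an outer corner of dom(z) with n >= p > q. Define X^ss_{p,q} := {A in Mat^ss_n(K) : A_{ij} = 0 for all (i,j) in ([p] x [q]) union ([q] x [p])}. Then X^ss_z intersect X^ss_{p,q} equals the union over v in Psi(z,p) of X^ss_v. -/

import Mathlib

namespace Paper

/-!
We model a permutation of the positive integers `{1, 2, 3, ...}` as an `Equiv.Perm ℕ`
that fixes `0`; all notions below refer only to positive inputs.
-/

/-- The rank `r_w(i,j) = #{a ∈ [i] : w(a) ∈ [j]}` of the `i × j` partial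
permutation matrix of `w`, where `[k] = {1, ..., k}`. -/
def rnk (w : Equiv.Perm ℕ) (i j : ℕ) : ℕ :=
  ((Finset.Icc 1 i).filter fun a => w a ∈ Finset.Icc 1 j).card

/-- Right descent set `Des_R(w) = {i ≥ 1 : w(i) > w(i+1)}`. -/
def DesR (w : Equiv.Perm ℕ) : Set ℕ := {i | 1 ≤ i ∧ w (i + 1) < w i}

/-- Left descent set `Des_L(w) = Des_R(w⁻¹)`. -/
def DesL (w : Equiv.Perm ℕ) : Set ℕ := DesR w⁻¹

/-- `S_∞`: permutations of the positive integers fixing all but finitely many points. -/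
def SInfty : Set (Equiv.Perm ℕ) :=
  {w | w 0 = 0 ∧ Set.Finite {i : ℕ | w i ≠ i}}

/-- `S^{m,n}_∞ = {w ∈ S_∞ : Des_R(w) ⊆ [m], Des_L(w) ⊆ [n]}`. -/
def SmnInfty (m n : ℕ) : Set (Equiv.Perm ℕ) :=
  {w | w ∈ SInfty ∧ DesR w ⊆ Set.Icc 1 m ∧ DesL w ⊆ Set.Icc 1 n}

/-- The Rothe diagram `D(w) = {(i,j) : 0 < j < w(i), 0 < i < w⁻¹(j)}`. -/
def Rothe (w : Equiv.Perm ℕ) : Set (ℕ × ℕ) :=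
  {p | 0 < p.2 ∧ p.2 < w p.1 ∧ 0 < p.1 ∧ p.1 < w⁻¹ p.2}

/-- The function `1_FPF`, sending `i ↦ i - (-1)^i` on positive integers (it fixes `0`). -/
def oneFPF : ℕ → ℕ := fun i => if i % 2 = 1 then i + 1 else i - 1

/-- `I^FPF_∞`: fixed-point-free involutions of the positive integers agreeing with
`1_FPF` at all sufficiently large inputs. -/
def IFPFInfty : Set (Equiv.Perm ℕ) :=
  {z | z 0 = 0 ∧ (∀ i, 1 ≤ i → z i ≠ i) ∧ z * z = 1 ∧ ∃ N, ∀ i, N ≤ i → z i = oneFPF i}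

/-- The skew-symmetric Rothe diagram `D^ss(z) = {(i,j) : 0 < j < z(i), j < i < z(j)}`. -/
def Dss (z : Equiv.Perm ℕ) : Set (ℕ × ℕ) :=
  {p | 0 < p.2 ∧ p.2 < z p.1 ∧ p.2 < p.1 ∧ p.1 < z p.2}

/-- `FPF_n(I_n) = {z ∈ I^FPF_∞ : D^ss(z) ⊆ [n] × [n]}`. -/
def FPFIn (n : ℕ) : Set (Equiv.Perm ℕ) :=
  {z | z ∈ IFPFInfty ∧ Dss z ⊆ Set.Icc 1 n ×ˢ Set.Icc 1 n}

/-- `ℓ_fpf(z) = |D^ss(z)|`. -/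
noncomputable def ellFpf (z : Equiv.Perm ℕ) : ℕ := (Dss z).ncard

/-- Bruhat order on `I^FPF_∞`: reflexive-transitive closure of `z < (i,j) z (i,j)`
whenever `i < j` and `ℓ_fpf` goes up by exactly one. -/
def fpfBruhatLe (z y : Equiv.Perm ℕ) : Prop :=
  Relation.ReflTransGen
    (fun a b => ∃ i j : ℕ, 1 ≤ i ∧ i < j ∧
      b = Equiv.swap i j * a * Equiv.swap i j ∧ ellFpf b = ellFpf a + 1) z y

/-- `i` is a visible descent of `z` if `i ≥ 1` and `z(i+1) < min(i, z(i))`. -/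
def visibleDescent (z : Equiv.Perm ℕ) (i : ℕ) : Prop :=
  1 ≤ i ∧ z (i + 1) < min i (z i)

/-- `Ψ(z, p) = {(p,r) z (p,r) : r > p, ℓ_fpf((p,r) z (p,r)) = ℓ_fpf(z) + 1}`. -/
def PsiSet (z : Equiv.Perm ℕ) (p : ℕ) : Set (Equiv.Perm ℕ) :=
  {y | ∃ r : ℕ, p < r ∧ y = Equiv.swap p r * z * Equiv.swap p r ∧ ellFpf y = ellFpf z + 1}

/-- The dominant component `dom(z) = {(i,j) : i, j ≥ 1, r_z(i,j) = 0}`. -/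
def domSet (z : Equiv.Perm ℕ) : Set (ℕ × ℕ) :=
  {p | 1 ≤ p.1 ∧ 1 ≤ p.2 ∧ rnk z p.1 p.2 = 0}

/-- `(p, q)` is an outer corner of `dom(z)`. -/
def IsOuterCorner (z : Equiv.Perm ℕ) (p q : ℕ) : Prop :=
  1 ≤ p ∧ 1 ≤ q ∧ (p, q) ∉ domSet z ∧
    (p = 1 ∨ (p - 1, q) ∈ domSet z) ∧ (q = 1 ∨ (p, q - 1) ∈ domSet z)

/-- `I_n`: involutions in `S_∞` fixing every `i > n`. -/
def InvolIn (n : ℕ) : Set (Equiv.Perm ℕ) :=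
  {w | w 0 = 0 ∧ w * w = 1 ∧ ∀ i, n < i → w i = i}

/-- The fixed points of `z` lying in `[n]`. -/
def fixedPtsIn (n : ℕ) (z : Equiv.Perm ℕ) : Finset ℕ :=
  (Finset.Icc 1 n).filter fun i => z i = i

/-- The function swapping `m + 2t - 1` and `m + 2t` for every `t ≥ 1`, fixing all other points. -/
def tailSwapFun (m : ℕ) : ℕ → ℕ := fun i =>
  if i ≤ m then i else if (i - m) % 2 = 1 then i + 1 else i - 1

theorem tailSwapFun_involutive (m : ℕ) : Function.Involutive (tailSwapFun m) := by
  intro i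
  unfold tailSwapFun
  split_ifs <;> omega

/-- The involution swapping `m + 2t - 1` and `m + 2t` for every `t ≥ 1`. -/
def tailSwap (m : ℕ) : Equiv.Perm ℕ :=
  Function.Involutive.toPerm _ (tailSwapFun_involutive m)

/-- The fixed-point-free standardization `FPF_n(z) = z ⋅ (i_1,n+1)⋯(i_k,n+k) ⋅ c`,
where `i_1 < ⋯ < i_k` are the fixed points of `z` in `[n]` and `c` swaps
`n+k+2t-1, n+k+2t` for all `t ≥ 1`. -/
noncomputable def fpfStd (n : ℕ) (z : Equiv.Perm ℕ) : Equiv.Perm ℕ :=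
  z *
    (List.ofFn fun t : Fin (fixedPtsIn n z).card =>
      Equiv.swap ((fixedPtsIn n z).orderEmbOfFin rfl t) (n + (t : ℕ) + 1)).prod *
    tailSwap (n + (fixedPtsIn n z).card)

/-- `Mat^ss_n(K)`: skew-symmetric `n × n` matrices (transpose is the negative, zero diagonal).
Row/column index `a : Fin n` corresponds to the (1-indexed) row/column `a + 1`. -/
def MatSS (K : Type*) [CommRing K] (n : ℕ) : Set (Matrix (Fin n) (Fin n) K) :=
  {A | A.transpose = -A ∧ ∀ i, A i i = 0}

/-- The skew-symmetric matrix Schubert variety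
`X^ss_z = {A ∈ Mat^ss_n : rank A_{[i][j]} ≤ r_z(i,j) for all i, j ∈ [n]}`. -/
noncomputable def Xss (K : Type*) [Field K] (n : ℕ) (z : Equiv.Perm ℕ) :
    Set (Matrix (Fin n) (Fin n) K) :=
  {A | A ∈ MatSS K n ∧ ∀ (i j : ℕ) (hi : i ≤ n) (hj : j ≤ n), 1 ≤ i → 1 ≤ j →
    (A.submatrix (Fin.castLE hi) (Fin.castLE hj)).rank ≤ rnk z i j}

/-- `#{(i,j) : i > j, j < z(i), i < z(j)}` for a permutation of `Fin N`
(the `0`-indexed version of `ℓ_fpf`). -/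
def ellFpfFin {N : ℕ} (z : Equiv.Perm (Fin N)) : ℕ :=
  (Finset.univ.filter fun p : Fin N × Fin N => p.2 < p.1 ∧ p.2 < z p.1 ∧ p.1 < z p.2).card

/-- The Pfaffian of an `N × N` matrix:
`pf(A) = ∑_{z fpf involution of [N]} (-1)^{ℓ_fpf(z)} ∏_{z(i) < i} A_{z(i), i}`.
(The sum is empty, hence `0`, when `N` is odd.) -/
noncomputable def Pfaffian {R : Type*} [CommRing R] {N : ℕ} (A : Matrix (Fin N) (Fin N) R) : R :=
  ∑ z ∈ Finset.univ.filter (fun z : Equiv.Perm (Fin N) => (∀ i, z i ≠ i) ∧ ∀ i, z (z i) = i),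
    (-1 : R) ^ ellFpfFin z * ∏ i ∈ Finset.univ.filter (fun i : Fin N => z i < i), A (z i) i

/-- Index set for the variables `u_{ij}`, `n ≥ i > j ≥ 1`, of the coordinate ring
`R_n = K[Mat^ss_n]`; the variable `⟨(a, b), _⟩` is `u_{a+1, b+1}`. -/
abbrev SSVar (n : ℕ) : Type := {p : Fin n × Fin n // p.2 < p.1}

/-- The generic skew-symmetric matrix `U^ss` over `R_n`. -/
noncomputable def Uss (K : Type*) [CommRing K] (n : ℕ) :
    Matrix (Fin n) (Fin n) (MvPolynomial (SSVar n) K) :=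
  Matrix.of fun i j =>
    if h : j < i then MvPolynomial.X ⟨(i, j), h⟩
    else if h' : i < j then -MvPolynomial.X ⟨(j, i), h'⟩
    else 0

/-- The ideal of polynomials vanishing on a set `X`, where a point `A` is evaluated
via `ev A : σ → K`. -/
noncomputable def vanishingIdeal {K : Type*} [CommRing K] {σ M : Type*}
    (X : Set M) (ev : M → σ → K) : Ideal (MvPolynomial σ K) where
  carrier := {f | ∀ A ∈ X, MvPolynomial.eval (ev A) f = 0}
  zero_mem' := by simp
  add_mem' := by
    intro f g hf hg
    simp only [Set.mem_setOf_eq] at *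
    intro A hA
    rw [map_add, hf A hA, hg A hA, add_zero]
  smul_mem' := by
    intro c f hf
    simp only [Set.mem_setOf_eq] at *
    intro A hA
    rw [smul_eq_mul, map_mul, hf A hA, mul_zero]

/-- `I(X^ss_z) ⊆ R_n`, where `u_{ij}` is evaluated at `A` as `A_{ij}`. -/
noncomputable def IXss (K : Type*) [Field K] (n : ℕ) (z : Equiv.Perm ℕ) :
    Ideal (MvPolynomial (SSVar n) K) :=
  vanishingIdeal (Xss K n z) fun A v => A v.1.1 v.1.2

/-- `pf(U^ss_{RR})` for a finite row/column set `R` (listed in increasing order). -/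
noncomputable def pfUss (K : Type*) [CommRing K] {n : ℕ} (R : Finset (Fin n)) :
    MvPolynomial (SSVar n) K :=
  Pfaffian ((Uss K n).submatrix (fun s => R.orderEmbOfFin rfl s) fun t => R.orderEmbOfFin rfl t)

/-- The ideal `I^ss_z`, generated by the Pfaffians `pf(U^ss_{RR})` over all nonempty
even-size `R ⊆ [n]` such that `R ⊆ [i]` and `|R ∩ [j]| > r_z(i,j)` for some `i ≥ j`. -/
noncomputable def IssIdeal (K : Type*) [Field K] (n : ℕ) (z : Equiv.Perm ℕ) :
    Ideal (MvPolynomial (SSVar n) K) :=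
  Ideal.span {f : MvPolynomial (SSVar n) K | ∃ R : Finset (Fin n),
    R.Nonempty ∧ Even R.card ∧
    (∃ i j : ℕ, 1 ≤ j ∧ j ≤ i ∧ i ≤ n ∧ (∀ a ∈ R, (a : ℕ) + 1 ≤ i) ∧
      rnk z i j < (R.filter fun a : Fin n => (a : ℕ) + 1 ≤ j).card) ∧
    f = pfUss K R}

/-- The square-free monomial `u^ss_{AB}`: zero if `A ⊙ B` meets the diagonal, and otherwise
the product of the variables `u_{ij}` over the pairs `i > j` with `(i,j)` or `(j,i)` in
`A ⊙ B = {(a_0, b_r), (a_1, b_{r-1}), ..., (a_r, b_0)}`. -/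
noncomputable def ussMon (K : Type*) [CommRing K] {n : ℕ} (A B : Finset (Fin n)) :
    MvPolynomial (SSVar n) K :=
  if h : A.card = B.card then
    if ∃ t : Fin A.card, (A.orderEmbOfFin rfl t : Fin n) = B.orderEmbOfFin h.symm t.rev then 0
    else
      ∏ v ∈ Finset.univ.filter (fun v : SSVar n => ∃ t : Fin A.card,
          (A.orderEmbOfFin rfl t = v.1.1 ∧ B.orderEmbOfFin h.symm t.rev = v.1.2) ∨
          (A.orderEmbOfFin rfl t = v.1.2 ∧ B.orderEmbOfFin h.symm t.rev = v.1.1)),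
        MvPolynomial.X v
  else 0

/-- The monomial ideal `J^ss_r` of a symmetric rank table `r`, generated by the monomials
`u^ss_{AB}` with `A ⊆ [i]`, `B ⊆ [j]`, `|A| = |B| = r(i,j) + 1` for some `n ≥ i ≥ j ≥ 1`. -/
noncomputable def JssIdealOfTable (K : Type*) [CommRing K] (n : ℕ) (r : ℕ → ℕ → ℕ) :
    Ideal (MvPolynomial (SSVar n) K) :=
  Ideal.span {g : MvPolynomial (SSVar n) K | ∃ (i j : ℕ) (A B : Finset (Fin n)),
    1 ≤ j ∧ j ≤ i ∧ i ≤ n ∧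
    (∀ a ∈ A, (a : ℕ) + 1 ≤ i) ∧ (∀ b ∈ B, (b : ℕ) + 1 ≤ j) ∧
    A.card = r i j + 1 ∧ B.card = r i j + 1 ∧ g = ussMon K A B}

/-- `J^ss_z = J^ss_{r_z}`. -/
noncomputable def JssIdeal (K : Type*) [CommRing K] (n : ℕ) (z : Equiv.Perm ℕ) :
    Ideal (MvPolynomial (SSVar n) K) :=
  JssIdealOfTable K n (rnk z)

/-- Total degree of a monomial (exponent vector). -/
def totalDeg {σ : Type*} (m : σ →₀ ℕ) : ℕ := m.sum fun _ e => e

/-- The lexicographic order on the variables `u_{ij}` by the pair `(i, j)`. -/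
def varLT {n : ℕ} (v w : SSVar n) : Prop :=
  v.1.1 < w.1.1 ∨ (v.1.1 = w.1.1 ∧ v.1.2 < w.1.2)

/-- The (graded) reverse lexicographic term order on monomials of `R_n`:
`m₁ < m₂` iff `deg m₁ < deg m₂`, or the degrees agree and the lexicographically largest
variable with different exponents has strictly larger exponent in `m₁`. -/
def revlexLT {n : ℕ} (m₁ m₂ : SSVar n →₀ ℕ) : Prop :=
  totalDeg m₁ < totalDeg m₂ ∨
    (totalDeg m₁ = totalDeg m₂ ∧ ∃ v, m₂ v < m₁ v ∧ ∀ w, varLT v w → m₁ w = m₂ w)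

/-- The initial ideal of `I` with respect to a strict term order `lt`: the ideal
generated by the leading monomials `init(f)` of the nonzero `f ∈ I`. -/
noncomputable def initIdeal {K : Type*} [CommRing K] {σ : Type*}
    (lt : (σ →₀ ℕ) → (σ →₀ ℕ) → Prop) (I : Ideal (MvPolynomial σ K)) :
    Ideal (MvPolynomial σ K) :=
  Ideal.span {g : MvPolynomial σ K | ∃ f ∈ I, f ≠ 0 ∧ ∃ m : σ →₀ ℕ, m ∈ f.support ∧
    (∀ m' ∈ f.support, m' ≠ m → lt m' m) ∧ g = MvPolynomial.monomial m (1 : K)}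

/-- A term order on the monomials of a polynomial ring: a linear order in which `1` is
the unique minimum and multiplication by a fixed monomial preserves order. -/
structure TermOrder (σ : Type*) where
  le : (σ →₀ ℕ) → (σ →₀ ℕ) → Prop
  trans : ∀ a b c, le a b → le b c → le a c
  antisymm : ∀ a b, le a b → le b a → a = b
  total : ∀ a b, le a b ∨ le b a
  zero_le : ∀ a, le 0 a
  add_le_add_right : ∀ a b c, le a b → le (a + c) (b + c)

/-- The initial ideal of `I` with respect to a term order `τ`. -/
noncomputable def initIdealLe {K : Type*} [CommRing K] {σ : Type*}
    (τ : TermOrder σ) (I : Ideal (MvPolynomial σ K)) : Ideal (MvPolynomial σ K) :=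
  Ideal.span {g : MvPolynomial σ K | ∃ f ∈ I, f ≠ 0 ∧ ∃ m : σ →₀ ℕ, m ∈ f.support ∧
    (∀ m' ∈ f.support, τ.le m' m) ∧ g = MvPolynomial.monomial m (1 : K)}

/-- An ideal is homogeneous (w.r.t. total degree) iff it contains all homogeneous
components of its elements. -/
def IsHomogIdeal {K : Type*} [CommSemiring K] {σ : Type*}
    (I : Ideal (MvPolynomial σ K)) : Prop :=
  ∀ f ∈ I, ∀ d : ℕ, MvPolynomial.homogeneousComponent d f ∈ I

/-- The reading order on boxes: rows top to bottom, each row right to left. -/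
def pdRel (p q : ℕ × ℕ) : Prop := p.1 < q.1 ∨ (p.1 = q.1 ∧ q.2 ≤ p.2)

instance : DecidableRel pdRel := fun p q => by unfold pdRel; infer_instance

instance : IsTrans (ℕ × ℕ) pdRel :=
  ⟨fun a b c hab hbc => by unfold pdRel at *; omega⟩

instance : IsAntisymm (ℕ × ℕ) pdRel :=
  ⟨fun a b hab hba => by
    unfold pdRel at hab hba
    exact Prod.ext_iff.mpr ⟨by omega, by omega⟩⟩

instance : IsTotal (ℕ × ℕ) pdRel :=
  ⟨fun a b => by unfold pdRel; omega⟩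

/-- The pipe dream reading word of a finite set `D` of boxes: the letters `i + j - 1`
over `(i, j) ∈ D`, in the order making `(i, -j)` increase lexicographically. -/
def pdWord (D : Finset (ℕ × ℕ)) : List ℕ :=
  (D.sort pdRel).map fun p => p.1 + p.2 - 1

/-- The product `s_{i_1} s_{i_2} ⋯ s_{i_l}` of simple transpositions. -/
def wordProd (l : List ℕ) : Equiv.Perm ℕ :=
  (l.map fun i => Equiv.swap i (i + 1)).prod

/-- `l` is a reduced word for `w`: a minimal-length word of positive letters whose
product of simple transpositions is `w`. -/
def IsReducedWordOf (w : Equiv.Perm ℕ) (l : List ℕ) : Prop :=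
  (∀ a ∈ l, 1 ≤ a) ∧ wordProd l = w ∧
    ∀ l' : List ℕ, (∀ a ∈ l', 1 ≤ a) → wordProd l' = w → l.length ≤ l'.length

/-- The set `RP(w)` of reduced pipe dreams for `w`. -/
def RP (w : Equiv.Perm ℕ) : Set (Finset (ℕ × ℕ)) :=
  {D | (∀ p ∈ D, 1 ≤ p.1 ∧ 1 ≤ p.2) ∧ IsReducedWordOf w (pdWord D)}

/-- `I^FPF_m`: involutions in `S_∞` that are fixed-point-free on `[m]` and fix
all `i > m`. -/
def IFPFm (m : ℕ) : Set (Equiv.Perm ℕ) :=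
  {y | y 0 = 0 ∧ y * y = 1 ∧ (∀ i, 1 ≤ i → i ≤ m → y i ≠ i) ∧ ∀ i, m < i → y i = i}

/-- `z = FPF_m(y)`: `z` agrees with `y` on `[m]` and swaps `m + 2k - 1, m + 2k`
for all `k ≥ 1`. -/
def IsFPFStdOf (m : ℕ) (y z : Equiv.Perm ℕ) : Prop :=
  (∀ i, i ≤ m → z i = y i) ∧
    ∀ k : ℕ, z (m + 2 * k + 1) = m + 2 * k + 2 ∧ z (m + 2 * k + 2) = m + 2 * k + 1

/-- The set `FP(z)` of fpf-involution pipe dreams for `z ∈ I^FPF_∞`. -/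
def FP (z : Equiv.Perm ℕ) : Set (Finset (ℕ × ℕ)) :=
  {E | ∃ (m : ℕ) (y : Equiv.Perm ℕ) (D : Finset (ℕ × ℕ)), Even m ∧ y ∈ IFPFm m ∧
    IsFPFStdOf m y z ∧ D ∈ RP y ∧ D.image Prod.swap = D ∧
    E = D.filter fun p => p.2 < p.1}

/-- The minor `det(U_{AB})` of the generic `m × n` matrix `U`, with rows `A` and
columns `B` listed in increasing order. -/
noncomputable def genMinor (K : Type*) [CommRing K] {m n : ℕ}
    (A : Finset (Fin m)) (B : Finset (Fin n)) (h : A.card = B.card) :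
    MvPolynomial (Fin m × Fin n) K :=
  (Matrix.of fun s t : Fin A.card =>
    (MvPolynomial.X (A.orderEmbOfFin rfl s, B.orderEmbOfFin h.symm t) :
      MvPolynomial (Fin m × Fin n) K)).det

/-- The antidiagonal monomial `u_{AB} = ∏_{(a,b) ∈ A ⊙ B} u_{ab}`. -/
noncomputable def genMon (K : Type*) [CommRing K] {m n : ℕ}
    (A : Finset (Fin m)) (B : Finset (Fin n)) (h : A.card = B.card) :
    MvPolynomial (Fin m × Fin n) K :=
  ∏ t : Fin A.card, MvPolynomial.X (A.orderEmbOfFin rfl t, B.orderEmbOfFin h.symm t.rev)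

/-- The exponent vector of the antidiagonal monomial `u_{AB}`. -/
noncomputable def antidiagExp {m n : ℕ} (A : Finset (Fin m)) (B : Finset (Fin n))
    (h : A.card = B.card) : (Fin m × Fin n) →₀ ℕ :=
  ∑ t : Fin A.card, Finsupp.single (A.orderEmbOfFin rfl t, B.orderEmbOfFin h.symm t.rev) 1

/-- The ideal `I_w`, generated by the minors `det(U_{AB})` with `A ⊆ [i]`, `B ⊆ [j]`,
`|A| = |B| = r_w(i,j) + 1` for some `(i,j) ∈ [m] × [n]`. -/
noncomputable def IwIdeal (K : Type*) [Field K] (m n : ℕ) (w : Equiv.Perm ℕ) :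
    Ideal (MvPolynomial (Fin m × Fin n) K) :=
  Ideal.span {g : MvPolynomial (Fin m × Fin n) K |
    ∃ (i j : ℕ) (A : Finset (Fin m)) (B : Finset (Fin n)) (h : A.card = B.card),
      1 ≤ i ∧ i ≤ m ∧ 1 ≤ j ∧ j ≤ n ∧ (∀ a ∈ A, (a : ℕ) + 1 ≤ i) ∧
      (∀ b ∈ B, (b : ℕ) + 1 ≤ j) ∧ A.card = rnk w i j + 1 ∧ g = genMinor K A B h}

/-- The monomial ideal `J_w`, generated by the monomials `u_{AB}` with `A ⊆ [i]`,
`B ⊆ [j]`, `|A| = |B| = r_w(i,j) + 1` for some `(i,j) ∈ [m] × [n]`. -/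
noncomputable def JwIdeal (K : Type*) [Field K] (m n : ℕ) (w : Equiv.Perm ℕ) :
    Ideal (MvPolynomial (Fin m × Fin n) K) :=
  Ideal.span {g : MvPolynomial (Fin m × Fin n) K |
    ∃ (i j : ℕ) (A : Finset (Fin m)) (B : Finset (Fin n)) (h : A.card = B.card),
      1 ≤ i ∧ i ≤ m ∧ 1 ≤ j ∧ j ≤ n ∧ (∀ a ∈ A, (a : ℕ) + 1 ≤ i) ∧
      (∀ b ∈ B, (b : ℕ) + 1 ≤ j) ∧ A.card = rnk w i j + 1 ∧ g = genMon K A B h}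

/-- The matrix Schubert variety
`X_w = {A ∈ Mat_{m×n} : rank A_{[i][j]} ≤ r_w(i,j) for all (i,j) ∈ [m] × [n]}`. -/
noncomputable def Xw (K : Type*) [Field K] (m n : ℕ) (w : Equiv.Perm ℕ) :
    Set (Matrix (Fin m) (Fin n) K) :=
  {A | ∀ (i j : ℕ) (hi : i ≤ m) (hj : j ≤ n), 1 ≤ i → 1 ≤ j →
    (A.submatrix (Fin.castLE hi) (Fin.castLE hj)).rank ≤ rnk w i j}

/-- `I(X_w)`: the ideal of polynomials vanishing on `X_w`. -/
noncomputable def IXw (K : Type*) [Field K] (m n : ℕ) (w : Equiv.Perm ℕ) :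
    Ideal (MvPolynomial (Fin m × Fin n) K) :=
  vanishingIdeal (Xw K m n w) fun A v => A v.1 v.2

/-- The variable `u_{pq}` (with `1 ≤ q < p ≤ n`) of `R_n`. -/
def ssvar {n : ℕ} (p q : ℕ) (hp : p ≤ n) (hq : 1 ≤ q) (hqp : q < p) : SSVar n :=
  ⟨(⟨p - 1, by omega⟩, ⟨q - 1, by omega⟩), Fin.mk_lt_mk.mpr (by omega)⟩

/-- Index set for the variables `u_{ij}`, `i > j ≥ 1`, over all positive integers. -/
abbrev PVar : Type := {p : ℕ × ℕ // 1 ≤ p.2 ∧ p.2 < p.1}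

/-- The generic skew-symmetric array `U^ss` over the positive integers:
`u_{xy}` if `x > y`, `-u_{yx}` if `x < y`, `0` if `x = y`. -/
noncomputable def UssP (K : Type*) [CommRing K] (x y : ℕ) : MvPolynomial PVar K :=
  if h : 1 ≤ y ∧ y < x then MvPolynomial.X ⟨(x, y), h⟩
  else if h' : 1 ≤ x ∧ x < y then -MvPolynomial.X ⟨(y, x), h'⟩
  else 0

/-- `pf(U^ss_{RR})` for a finite set `R` of positive integers. -/
noncomputable def pfUssP (K : Type*) [CommRing K] (R : Finset ℕ) : MvPolynomial PVar K :=
  Pfaffian (Matrix.of fun s t : Fin R.card =>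
    UssP K (R.orderEmbOfFin rfl s) (R.orderEmbOfFin rfl t))

/-- `g_{AB}`: the Pfaffian of the `(|B|+|A|) × (|B|+|A|)` skew-symmetric matrix whose
rows and columns are labeled by `B` (increasing) followed by `A` (increasing), with
entry `U^ss_{xy}` at a position labeled `(x, y)`, except that the entry is `0` when
both labels come from the `A`-block. -/
noncomputable def gAB (K : Type*) [CommRing K] (A B : Finset ℕ) : MvPolynomial PVar K :=
  Pfaffian ((Matrix.of fun p q : Fin B.card ⊕ Fin A.card =>
      match p, q with
      | Sum.inl s, Sum.inl t => UssP K (B.orderEmbOfFin rfl s) (B.orderEmbOfFin rfl t)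
      | Sum.inl s, Sum.inr t => UssP K (B.orderEmbOfFin rfl s) (A.orderEmbOfFin rfl t)
      | Sum.inr s, Sum.inl t => UssP K (A.orderEmbOfFin rfl s) (B.orderEmbOfFin rfl t)
      | Sum.inr _, Sum.inr _ => (0 : MvPolynomial PVar K)).submatrix
    finSumFinEquiv.symm finSumFinEquiv.symm)

/-- The exponent of the sign `⟨T, S⟩ = (-1)^{|S||T| + C(|S|,2) + ∑ of the (1-indexed)
positions in the increasing enumeration of `T` occupied by elements of `S`}`. -/
def setSgnExp (T S : Finset ℕ) : ℕ :=
  S.card * T.card + Nat.choose S.card 2 +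
    ∑ t : Fin T.card, if T.orderEmbOfFin rfl t ∈ S then (t : ℕ) + 1 else 0

/-!
The table `R` of northwest ranks of a skew-symmetric matrix `A` is symmetric, even on the diagonal,
supermodular, and grows by at most one per row. Membership in `X^ss_z` says `R ≤ r_z`, and at the
outer corner `r_z(p, q) = 1`, so `A` vanishes on the block exactly when `R(p, q) < r_z(p, q)`.

Conjugating `z` by `(p, r)` with `z(p) < z(r)` lowers `r_z` by one on the rectangle
`[p, r) × [z(p), z(r))` and by one on its transpose. If `R ≤ r_z` but no `v ∈ Ψ(z, p)` satisfies
`R ≤ r_v`, then every such rectangle contains a tight position, one where `R = r_z`; where the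
rectangle overlaps its transpose this uses the parity of the diagonal. Where `r_z` is modular,
supermodularity of `R` moves tight positions towards the corner, and in the end `(p, q)` itself is
tight, so that `A` does not vanish on the block.
-/

section LinearAlgebra

open Module

variable {K V V' : Type*} [Field K] [AddCommGroup V] [Module K V] [AddCommGroup V'] [Module K V']

section HyperbolicPair

variable {B : V →ₗ[K] V →ₗ[K] K} {W : Submodule K V} {x y : V}

theorem map_prod_eq_top_of_hyperbolic_pair (hB : B.IsAlt) (hx : x ∈ W) (hy : y ∈ W)
    (hxy : B x y = 1) :
    W.map ((B x).prod (B y)) = ⊤ := by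
  have hyx : B y x = -1 := by rw [← hB.neg, hxy]
  refine eq_top_iff.2 fun ⟨a, b⟩ _ => ⟨a • y - b • x, W.sub_mem (W.smul_mem a hy)
    (W.smul_mem b hx), ?_⟩
  simp [hxy, hyx, hB.self_eq_zero]

theorem inf_orthogonalBilin_eq_of_hyperbolic_pair (hB : B.IsAlt) (hx : x ∈ W) (hy : y ∈ W)
    (hxy : B x y = 1) :
    (W ⊓ LinearMap.ker ((B x).prod (B y))) ⊓
        (W ⊓ LinearMap.ker ((B x).prod (B y))).orthogonalBilin B =
      W ⊓ W.orthogonalBilin B := by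
  have hyx : B y x = -1 := by rw [← hB.neg, hxy]
  ext v
  simp only [Submodule.mem_inf, LinearMap.mem_ker, LinearMap.prod_apply, Function.prod_apply,
    Prod.mk_eq_zero, Submodule.mem_orthogonalBilin_iff]
  constructor
  · rintro ⟨⟨hv, hxv, hyv⟩, horth⟩
    refine ⟨hv, fun w hw => ?_⟩
    have hproj := horth (w - B x w • y + B y w • x)
      ⟨W.add_mem (W.sub_mem hw (W.smul_mem _ hy)) (W.smul_mem _ hx),
        by simp [hxy, hB.self_eq_zero], by simp [hyx, hB.self_eq_zero]⟩
    simpa [hxv, hyv] using hproj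
  · rintro ⟨hv, horth⟩
    exact ⟨⟨hv, horth x hx, horth y hy⟩, fun w hw => horth w hw.1⟩

end HyperbolicPair

variable [FiniteDimensional K V]

theorem finrank_map_add_finrank_inf_ker (f : V →ₗ[K] V') (W : Submodule K V) :
    finrank K (W.map f) + finrank K (W ⊓ LinearMap.ker f : Submodule K V) = finrank K W := by
  rw [← LinearMap.finrank_range_add_finrank_ker (f.domRestrict W), LinearMap.range_domRestrict,
    LinearMap.ker_domRestrict, ← Submodule.finrank_map_subtype_eq, Submodule.map_comap_subtype]

theorem finrank_map_add_finrank_le_of_le (f : V →ₗ[K] V') {W U : Submodule K V} (h : W ≤ U) :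
    finrank K (U.map f) + finrank K W ≤ finrank K U + finrank K (W.map f) := by
  have hker := Submodule.finrank_mono (inf_le_inf_right (LinearMap.ker f) h)
  have hU := finrank_map_add_finrank_inf_ker f U
  have hW := finrank_map_add_finrank_inf_ker f W
  omega

/-- Splitting off hyperbolic planes does not change the radical. -/
theorem even_finrank_add_finrank_radical {B : V →ₗ[K] V →ₗ[K] K} (hB : B.IsAlt)
    (W : Submodule K V) :
    Even (finrank K W + finrank K (W ⊓ W.orthogonalBilin B : Submodule K V)) := by
  induction hd : finrank K W using Nat.strong_induction_on generalizing W with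
  | _ d ih =>
  subst hd
  by_cases hzero : ∀ x ∈ W, ∀ y ∈ W, B x y = 0
  · rw [inf_eq_left.2 fun v hv w hw => hzero w hw v hv]
    exact Even.add_self _
  push Not at hzero
  obtain ⟨x, hx, y, hy, hxy⟩ := hzero
  have hy' : (B x y)⁻¹ • y ∈ W := W.smul_mem _ hy
  have hxy' : B x ((B x y)⁻¹ • y) = 1 := by simp [hxy]
  have hdim := finrank_map_add_finrank_inf_ker ((B x).prod (B ((B x y)⁻¹ • y))) W
  rw [map_prod_eq_top_of_hyperbolic_pair hB hx hy' hxy', finrank_top, finrank_prod,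
    finrank_self] at hdim
  have heven := ih _ (by omega) (W ⊓ LinearMap.ker ((B x).prod (B ((B x y)⁻¹ • y)))) rfl
  rw [inf_orthogonalBilin_eq_of_hyperbolic_pair hB hx hy' hxy'] at heven
  rw [← hdim, add_assoc]
  exact even_two.add heven

end LinearAlgebra

section MatrixRank

variable {K m n : Type*} [Field K]

theorem isAlt_toLinearMap₂' [Fintype n] [DecidableEq n] {M : Matrix n n K}
    (hM : M.transpose = -M) (hdiag : ∀ i, M i i = 0) :
    (Matrix.toLinearMap₂' K M : (n → K) →ₗ[K] (n → K) →ₗ[K] K).IsAlt := by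
  intro x
  rw [Matrix.toLinearMap₂'_apply, ← Finset.sum_product']
  refine Finset.sum_involution (fun ij _ => (ij.2, ij.1)) ?_ ?_ (by simp) (by simp)
  · rintro ⟨i, j⟩ -
    have hji : M j i = -M i j := congrFun₂ hM i j
    simp only [smul_eq_mul, hji]
    ring
  · rintro ⟨i, j⟩ - hne heq
    obtain rfl : j = i := (Prod.mk.inj heq).1
    simp [hdiag] at hne

theorem even_rank_of_transpose_eq_neg [Fintype n] {M : Matrix n n K} (hM : M.transpose = -M)
    (hdiag : ∀ i, M i i = 0) : Even M.rank := by
  classical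
  have heven := even_finrank_add_finrank_radical (isAlt_toLinearMap₂' hM hdiag) ⊤
  have hrad : (⊤ : Submodule K (n → K)).orthogonalBilin
      (Matrix.toLinearMap₂' K M : (n → K) →ₗ[K] (n → K) →ₗ[K] K) = LinearMap.ker M.mulVecLin := by
    ext v
    simp only [Submodule.mem_orthogonalBilin_iff, Submodule.mem_top, true_imp_iff,
      Matrix.toLinearMap₂'_apply', LinearMap.mem_ker, Matrix.mulVecLin_apply]
    exact ⟨fun h => dotProduct_eq_zero _ fun w => by rw [dotProduct_comm, h],
      fun h w => by simp [h]⟩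
  rw [top_inf_eq, hrad, finrank_top, ← M.mulVecLin.finrank_range_add_finrank_ker] at heven
  rw [Matrix.rank]
  grind

theorem matrix_rank_neg [Fintype n] (M : Matrix m n K) : (-M).rank = M.rank := by
  have hneg : (-M).mulVecLin = -M.mulVecLin := by ext; simp
  rw [Matrix.rank, Matrix.rank, hneg, LinearMap.range_neg]

theorem matrix_rank_eq_zero_iff [Finite m] [Fintype n] {M : Matrix m n K} :
    M.rank = 0 ↔ M = 0 := by
  classical
  rw [Matrix.rank, Submodule.finrank_eq_zero, LinearMap.range_eq_bot, ← Matrix.toLin'_apply']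
  exact LinearEquiv.map_eq_zero_iff _

variable [Finite m] [Fintype n] (M : Matrix m n K)

theorem rank_submatrix_add_rank_submatrix_le {m' n' : Type*} [Fintype n'] (f : m' → m)
    (g : n' → n) :
    (M.submatrix f id).rank + (M.submatrix id g).rank ≤ M.rank + (M.submatrix f g).rank := by
  have hcols : Submodule.span K (Set.range (M.submatrix id g).col) ≤
      Submodule.span K (Set.range M.col) :=
    Submodule.span_mono (Set.range_subset_iff.2 fun j => ⟨g j, rfl⟩)
  have hle := finrank_map_add_finrank_le_of_le (LinearMap.funLeft K K f) hcols
  rw [Submodule.map_span, Submodule.map_span, ← Set.range_comp, ← Set.range_comp] at hle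
  simp only [Matrix.rank_eq_finrank_span_cols]
  exact hle

theorem rank_le_rank_submatrix_add_ncard {m' : Type*} [Finite m'] (f : m' → m) :
    M.rank ≤ (M.submatrix f id).rank + (Set.range f)ᶜ.ncard := by
  have := Fintype.ofFinite m
  classical
  have hrows : Set.range M.row = Set.range (M.submatrix f id).row ∪ M.row '' (Set.range f)ᶜ := by
    have hf : Set.range (M.submatrix f id).row = M.row '' Set.range f :=
      Set.range_comp M.row f
    rw [hf, ← Set.image_union, Set.union_compl_self, Set.image_univ]
  have hnew : Module.finrank K (Submodule.span K (M.row '' (Set.range f)ᶜ)) ≤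
      (Set.range f)ᶜ.ncard := by
    refine (finrank_span_le_card _).trans ?_
    rw [← Set.ncard_eq_toFinset_card']
    exact Set.ncard_image_le
  rw [Matrix.rank_eq_finrank_span_row, Matrix.rank_eq_finrank_span_row, hrows,
    Submodule.span_union]
  exact (Submodule.finrank_add_le_finrank_add_finrank _ _).trans (by gcongr)

end MatrixRank

section NorthwestRank

variable {K : Type*} [Field K] {m n : ℕ}

/-- The rank of the northwest block `A_{[i][j]}` of `A`. The block is cut out by inequalities on
the row and column numbers, so `i` and `j` may exceed the dimensions of `A`. -/
noncomputable def nwRank (A : Matrix (Fin m) (Fin n) K) (i j : ℕ) : ℕ :=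
  (A.submatrix (Subtype.val : {k : Fin m // (k : ℕ) < i} → Fin m)
    (Subtype.val : {k : Fin n // (k : ℕ) < j} → Fin n)).rank

theorem nwRank_eq_rank_submatrix_castLE (A : Matrix (Fin m) (Fin n) K) {i j : ℕ} (hi : i ≤ m)
    (hj : j ≤ n) : nwRank A i j = (A.submatrix (Fin.castLE hi) (Fin.castLE hj)).rank :=
  (Matrix.rank_submatrix _ (Fin.castLEOrderIso hi).toEquiv (Fin.castLEOrderIso hj).toEquiv).symm

theorem nwRank_min (A : Matrix (Fin m) (Fin n) K) (i j : ℕ) :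
    nwRank A (min i m) (min j n) = nwRank A i j := by
  have hsub (k l : ℕ) (a : Fin k) : (a : ℕ) < min l k ↔ (a : ℕ) < l := by simp
  exact Matrix.rank_submatrix (A.submatrix Subtype.val Subtype.val)
    (Equiv.subtypeEquivRight (hsub m i)) (Equiv.subtypeEquivRight (hsub n j))

theorem nwRank_eq_zero_iff {A : Matrix (Fin m) (Fin n) K} {i j : ℕ} :
    nwRank A i j = 0 ↔ ∀ (a : Fin m) (b : Fin n), (a : ℕ) < i → (b : ℕ) < j → A a b = 0 := by
  rw [nwRank, matrix_rank_eq_zero_iff, ← Matrix.ext_iff]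
  exact ⟨fun h a b ha hb => h ⟨a, ha⟩ ⟨b, hb⟩, fun h a b => h a b a.2 b.2⟩

theorem nwRank_transpose (A : Matrix (Fin m) (Fin n) K) (i j : ℕ) :
    nwRank A.transpose i j = nwRank A j i := by
  rw [nwRank, ← Matrix.transpose_submatrix, Matrix.rank_transpose, nwRank]

theorem nwRank_neg (A : Matrix (Fin m) (Fin n) K) (i j : ℕ) : nwRank (-A) i j = nwRank A i j :=
  matrix_rank_neg _

theorem nwRank_supermodular (A : Matrix (Fin m) (Fin n) K) {a a' b b' : ℕ} (ha : a ≤ a')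
    (hb : b' ≤ b) : nwRank A a b + nwRank A a' b' ≤ nwRank A a' b + nwRank A a b' := by
  let rowIncl : {k : Fin m // (k : ℕ) < a} → {k : Fin m // (k : ℕ) < a'} :=
    Subtype.map id fun _ h => h.trans_le ha
  let colIncl : {k : Fin n // (k : ℕ) < b'} → {k : Fin n // (k : ℕ) < b} :=
    Subtype.map id fun _ h => h.trans_le hb
  exact rank_submatrix_add_rank_submatrix_le (A.submatrix Subtype.val Subtype.val) rowIncl colIncl

theorem nwRank_add_rows_le (A : Matrix (Fin m) (Fin n) K) (a d b : ℕ) :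
    nwRank A (a + d) b ≤ nwRank A a b + d := by
  let incl : {k : Fin m // (k : ℕ) < a} → {k : Fin m // (k : ℕ) < a + d} :=
    Subtype.map id fun _ h => h.trans_le (Nat.le_add_right a d)
  have hcard : (Set.range incl)ᶜ.ncard ≤ d := by
    have hmem : ∀ k ∈ (Set.range incl)ᶜ, (k.1 : ℕ) ∈ Set.Ico a (a + d) := fun k hk =>
      ⟨not_lt.1 fun hlt => hk ⟨⟨k, hlt⟩, rfl⟩, k.2⟩
    have hle := Set.ncard_le_ncard_of_injOn (fun k => (k.1 : ℕ)) hmem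
      (fun k _ l _ h => Subtype.ext (Fin.ext h)) (Set.finite_Ico a (a + d))
    simpa using hle
  exact (rank_le_rank_submatrix_add_ncard _ incl).trans (Nat.add_le_add_left hcard _)

/-- The properties of the table of northwest ranks of a skew-symmetric matrix with zero diagonal
from which the comparison with the tables `r_z` is made. -/
structure IsSkewRankTable (R : ℕ → ℕ → ℕ) : Prop where
  symm : ∀ i j, R i j = R j i
  even_diag : ∀ i, Even (R i i)
  supermodular : ∀ {a a' b b' : ℕ}, a ≤ a' → b' ≤ b → R a b + R a' b' ≤ R a' b + R a b'
  add_rows_le : ∀ a d b, R (a + d) b ≤ R a b + d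

theorem isSkewRankTable_nwRank {A : Matrix (Fin n) (Fin n) K} (hA : A ∈ MatSS K n) :
    IsSkewRankTable (nwRank A) where
  symm i j := by rw [← nwRank_transpose, hA.1, nwRank_neg]
  even_diag i := even_rank_of_transpose_eq_neg
    (by rw [Matrix.transpose_submatrix, hA.1, Matrix.submatrix_neg]; rfl) fun k => hA.2 k
  supermodular := nwRank_supermodular A
  add_rows_le := nwRank_add_rows_le A

end NorthwestRank

section RankTables

variable {w z : Equiv.Perm ℕ}

theorem rnk_zero_left (w : Equiv.Perm ℕ) (j : ℕ) : rnk w 0 j = 0 := by simp [rnk]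

theorem rnk_succ_left (w : Equiv.Perm ℕ) (i j : ℕ) :
    rnk w (i + 1) j = rnk w i j + if w (i + 1) ∈ Finset.Icc 1 j then 1 else 0 := by
  simp only [rnk, Finset.card_filter]
  exact Finset.sum_Icc_succ_top (Nat.le_add_left 1 i) _

theorem rnk_mono (w : Equiv.Perm ℕ) {i i' j j' : ℕ} (hi : i ≤ i') (hj : j ≤ j') :
    rnk w i j ≤ rnk w i' j' :=
  Finset.card_le_card <| (Finset.filter_subset_filter _ (Finset.Icc_subset_Icc_right hi)).trans <|
    Finset.monotone_filter_right _ fun _ _ h => Finset.Icc_subset_Icc_right hj h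

theorem rnk_inv (w : Equiv.Perm ℕ) (i j : ℕ) : rnk w⁻¹ i j = rnk w j i :=
  Finset.card_equiv w⁻¹ fun a => by simp [and_comm]

theorem rnk_comm (hz : z * z = 1) (i j : ℕ) : rnk z i j = rnk z j i := by
  rw [← rnk_inv, inv_eq_of_mul_eq_one_right hz]

theorem even_rnk_self (hz : z * z = 1) (hfix : ∀ i, 1 ≤ i → z i ≠ i) (i : ℕ) :
    Even (rnk z i i) := by
  have hzz (a : ℕ) : z (z a) = a := Equiv.congr_fun hz a
  rw [← ZMod.natCast_eq_zero_iff_even, rnk, Finset.card_eq_sum_ones, Nat.cast_sum]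
  refine Finset.sum_involution (fun a _ => z a) (fun _ _ => by decide) ?_ ?_ fun a _ => hzz a
  · intro a ha _
    exact hfix a (Finset.mem_Icc.1 (Finset.mem_filter.1 ha).1).1
  · intro a ha
    simpa only [Finset.mem_filter, hzz] using And.symm (Finset.mem_filter.1 ha)

theorem rnk_add_left_of_forall_mem {a d b : ℕ}
    (h : ∀ x, a < x → x ≤ a + d → w x ∈ Finset.Icc 1 b) : rnk w (a + d) b = rnk w a b + d := by
  induction d with
  | zero => rfl
  | succ d ih =>
    rw [← add_assoc, rnk_succ_left, ih fun x hax hxd => h x hax (by omega),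
      if_pos (h _ (by omega) (by omega)), add_assoc]

theorem rnk_add_rnk_eq_of_forall_notMem_Ioc {a a' b b' : ℕ} (ha : a ≤ a') (hb : b' ≤ b)
    (h : ∀ x, a < x → x ≤ a' → w x ∉ Finset.Ioc b' b) :
    rnk w a b + rnk w a' b' = rnk w a' b + rnk w a b' := by
  induction a', ha using Nat.le_induction with
  | base => rfl
  | succ k hak ih =>
    have hk := h (k + 1) (by omega) le_rfl
    have hiff : w (k + 1) ∈ Finset.Icc 1 b ↔ w (k + 1) ∈ Finset.Icc 1 b' := by
      simp only [Finset.mem_Icc, Finset.mem_Ioc] at hk ⊢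
      omega
    have hih := ih fun x hax hxk => h x hax (by omega)
    simp only [rnk_succ_left, hiff]
    omega

theorem rnk_mul_swap {a b : ℕ} (ha : 1 ≤ a) (hab : a < b) (hwa : 1 ≤ w a) (hwab : w a < w b)
    (i j : ℕ) :
    rnk w i j = rnk (w * Equiv.swap a b) i j +
      if i ∈ Finset.Ico a b ∧ j ∈ Finset.Ico (w a) (w b) then 1 else 0 := by
  simp only [Finset.mem_Ico]
  induction i with
  | zero => simp [rnk_zero_left, Nat.one_le_iff_ne_zero.1 ha]
  | succ k ih =>
    rw [rnk_succ_left, rnk_succ_left, ih, Equiv.Perm.mul_apply, Equiv.swap_apply_def]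
    simp only [Finset.mem_Icc]
    by_cases hka : k + 1 = a
    · rw [hka]
      split_ifs <;> omega
    by_cases hkb : k + 1 = b
    · rw [hkb]
      split_ifs <;> omega
    rw [if_neg hka, if_neg hkb]
    split_ifs <;> omega

end RankTables

section FixedPointFreeInvolutions

variable {z : Equiv.Perm ℕ} {N p r : ℕ}

theorem apply_apply_of_mem_IFPFInfty (hz : z ∈ IFPFInfty) (i : ℕ) : z (z i) = i :=
  Equiv.congr_fun hz.2.2.1 i

theorem inv_eq_of_mem_IFPFInfty (hz : z ∈ IFPFInfty) : z⁻¹ = z :=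
  inv_eq_of_mul_eq_one_right hz.2.2.1

theorem one_le_apply_of_mem_IFPFInfty (hz : z ∈ IFPFInfty) {i : ℕ} (hi : 1 ≤ i) : 1 ≤ z i := by
  by_contra! hlt
  have hzz := apply_apply_of_mem_IFPFInfty hz i
  rw [Nat.lt_one_iff.1 hlt, hz.1] at hzz
  omega

theorem lt_oneFPF (hN : Even N) {i : ℕ} (hi : N < i) : N < oneFPF i := by
  rw [oneFPF]
  grind

theorem oneFPF_le (i : ℕ) : oneFPF i ≤ i + 1 := by
  rw [oneFPF]
  split_ifs <;> omega

/-- `z` is a fixed-point-free involution of the positive integers which agrees with `1_FPF` beyond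
the even number `N`, and therefore permutes `[N]`. -/
structure IsFPFInvolutionUpTo (N : ℕ) (z : Equiv.Perm ℕ) : Prop where
  mem : z ∈ IFPFInfty
  even : Even N
  tail : ∀ i, N < i → z i = oneFPF i

theorem exists_isFPFInvolutionUpTo (hz : z ∈ IFPFInfty) (m : ℕ) :
    ∃ N, m ≤ N ∧ IsFPFInvolutionUpTo N z := by
  obtain ⟨N, hN⟩ := hz.2.2.2
  exact ⟨2 * (N + m), by omega, hz, even_two_mul _, fun i hi => hN i (by omega)⟩

namespace IsFPFInvolutionUpTo

theorem apply_le (h : IsFPFInvolutionUpTo N z) {i : ℕ} (hi : i ≤ N) : z i ≤ N := by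
  by_contra! hlt
  have hgt := lt_oneFPF h.even hlt
  rw [← h.tail _ hlt, apply_apply_of_mem_IFPFInfty h.mem] at hgt
  omega

theorem apply_mem_Icc (h : IsFPFInvolutionUpTo N z) {i : ℕ} (hi : i ∈ Finset.Icc 1 N) :
    z i ∈ Finset.Icc 1 N := by
  rw [Finset.mem_Icc] at hi ⊢
  exact ⟨one_le_apply_of_mem_IFPFInfty h.mem hi.1, h.apply_le hi.2⟩

theorem conj_swap (h : IsFPFInvolutionUpTo N z) (hp : 1 ≤ p) (hpr : p < r) (hrN : r ≤ N) :
    IsFPFInvolutionUpTo N (Equiv.swap p r * z * Equiv.swap p r) := by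
  have swap_of_lt {i : ℕ} (hi : N < i) : Equiv.swap p r i = i :=
    Equiv.swap_apply_of_ne_of_ne (by omega) (by omega)
  have swap_zero : Equiv.swap p r 0 = 0 := Equiv.swap_apply_of_ne_of_ne (by omega) (by omega)
  have htail (i : ℕ) (hi : N < i) : (Equiv.swap p r * z * Equiv.swap p r) i = oneFPF i := by
    rw [Equiv.Perm.mul_apply, Equiv.Perm.mul_apply, swap_of_lt hi, h.tail i hi,
      swap_of_lt (lt_oneFPF h.even hi)]
  refine ⟨⟨?_, fun i hi hfix => ?_, ?_, N + 1, htail⟩, h.even, htail⟩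
  · rw [Equiv.Perm.mul_apply, Equiv.Perm.mul_apply, swap_zero, h.mem.1, swap_zero]
  · have hswap : 1 ≤ Equiv.swap p r i := by
      rw [Equiv.swap_apply_def]
      split_ifs <;> omega
    refine h.mem.2.1 _ hswap ?_
    rwa [Equiv.Perm.mul_apply, Equiv.Perm.mul_apply, Equiv.swap_apply_eq_iff] at hfix
  · rw [mul_assoc, mul_assoc, mul_assoc, Equiv.swap_mul_self_mul, ← mul_assoc z z, h.mem.2.2.1,
      one_mul, Equiv.swap_mul_self]

end IsFPFInvolutionUpTo

theorem conj_swap_mem_IFPFInfty (hz : z ∈ IFPFInfty) (hp : 1 ≤ p) (hpr : p < r) :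
    Equiv.swap p r * z * Equiv.swap p r ∈ IFPFInfty := by
  obtain ⟨N, hrN, hN⟩ := exists_isFPFInvolutionUpTo hz r
  exact (hN.conj_swap hp hpr hrN).mem

theorem swap_mul_apply_left (hz : z ∈ IFPFInfty) (hp : 1 ≤ p) (hpr : p < r) (hlt : z p < z r) :
    (Equiv.swap p r * z) p = z p := by
  refine Equiv.swap_apply_of_ne_of_ne (hz.2.1 p hp) fun hzp => ?_
  have hzz := apply_apply_of_mem_IFPFInfty hz p
  rw [hzp] at hzz hlt
  omega

theorem swap_mul_apply_right (hz : z ∈ IFPFInfty) (hpr : p < r) (hlt : z p < z r) :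
    (Equiv.swap p r * z) r = z r := by
  refine Equiv.swap_apply_of_ne_of_ne (fun hzr => ?_) (hz.2.1 r (by omega))
  have hzz := apply_apply_of_mem_IFPFInfty hz r
  rw [hzr] at hzz hlt
  omega

theorem rnk_conj_swap (hz : z ∈ IFPFInfty) (hp : 1 ≤ p) (hpr : p < r) (hlt : z p < z r)
    (i j : ℕ) :
    rnk z i j = rnk (Equiv.swap p r * z * Equiv.swap p r) i j +
      (if j ∈ Finset.Ico p r ∧ i ∈ Finset.Ico (z p) (z r) then 1 else 0) +
      if i ∈ Finset.Ico p r ∧ j ∈ Finset.Ico (z p) (z r) then 1 else 0 := by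
  have hzp := one_le_apply_of_mem_IFPFInfty hz hp
  have hleft := swap_mul_apply_left hz hp hpr hlt
  have hright := swap_mul_apply_right hz hpr hlt
  have hinv : (z * Equiv.swap p r)⁻¹ = Equiv.swap p r * z := by
    rw [mul_inv_rev, Equiv.swap_inv, inv_eq_of_mem_IFPFInfty hz]
  rw [rnk_mul_swap hp hpr hzp hlt, ← rnk_inv, hinv,
    rnk_mul_swap hp hpr (by rwa [hleft]) (by rwa [hleft, hright]), hleft, hright,
    rnk_comm (conj_swap_mem_IFPFInfty hz hp hpr).2.2.1]

end FixedPointFreeInvolutions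

section Lengths

variable {N a b : ℕ} {w z : Equiv.Perm ℕ}

/-- The indicator of `i < j` being an inversion of `w`. -/
def invIndicator (w : Equiv.Perm ℕ) (i j : ℕ) : ℕ := if i < j ∧ w j < w i then 1 else 0

/-- The number of inversions of `w` among the positions `1, …, N`. -/
def invCount (N : ℕ) (w : Equiv.Perm ℕ) : ℕ :=
  ∑ i ∈ Finset.Icc 1 N, ∑ j ∈ Finset.Icc 1 N, invIndicator w i j

theorem sum_comp_perm_of_forall_mem {α : Type*} {S : Finset α} {σ : Equiv.Perm α}
    (hσ : ∀ i ∈ S, σ i ∈ S) (f : α → ℕ) : ∑ i ∈ S, f (σ i) = ∑ i ∈ S, f i := by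
  have hmap : S.map σ.toEmbedding = S := by
    refine Finset.eq_of_subset_of_card_le (fun x hx => ?_) (Finset.card_map _).ge
    obtain ⟨i, hi, rfl⟩ := Finset.mem_map.1 hx
    exact hσ i hi
  conv_rhs => rw [← hmap]
  exact (Finset.sum_map S σ.toEmbedding f).symm

theorem invCount_inv (hw : ∀ i ∈ Finset.Icc 1 N, w i ∈ Finset.Icc 1 N) :
    invCount N w⁻¹ = invCount N w := by
  have hreindex := sum_comp_perm_of_forall_mem hw
  rw [invCount, invCount, ← hreindex, Finset.sum_comm, ← hreindex]
  simp only [invIndicator, Equiv.Perm.coe_inv, Equiv.symm_apply_apply, and_comm]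

theorem sum_sum_insert_insert {T : Finset ℕ} (hab : a ≠ b) (ha : a ∉ T) (hb : b ∉ T)
    (f : ℕ → ℕ → ℕ) :
    ∑ i ∈ insert a (insert b T), ∑ j ∈ insert a (insert b T), f i j =
      ∑ i ∈ T, ∑ j ∈ T, f i j + ∑ e ∈ T, (f a e + f e a + f b e + f e b) +
        (f a a + f a b + f b a + f b b) := by
  have ha' : a ∉ insert b T := by simp [hab, ha]
  simp only [Finset.sum_insert ha', Finset.sum_insert hb, Finset.sum_add_distrib]
  ring

theorem mul_swap_apply_of_ne_of_ne {e : ℕ} (hea : e ≠ a) (heb : e ≠ b) :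
    (w * Equiv.swap a b) e = w e := by
  rw [Equiv.Perm.mul_apply, Equiv.swap_apply_of_ne_of_ne hea heb]

theorem invIndicator_mul_swap_cross {e : ℕ} (hab : a < b) (hlt : w a < w b) (hea : e ≠ a)
    (heb : e ≠ b) :
    invIndicator (w * Equiv.swap a b) a e + invIndicator (w * Equiv.swap a b) e a +
        invIndicator (w * Equiv.swap a b) b e + invIndicator (w * Equiv.swap a b) e b =
      invIndicator w a e + invIndicator w e a + invIndicator w b e + invIndicator w e b +
        2 * if e ∈ Finset.Ioo a b ∧ w e ∈ Finset.Ioo (w a) (w b) then 1 else 0 := by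
  have hwa : (w * Equiv.swap a b) a = w b := by simp
  have hwb : (w * Equiv.swap a b) b = w a := by simp
  have hwea : w e ≠ w a := w.injective.ne hea
  have hweb : w e ≠ w b := w.injective.ne heb
  simp only [invIndicator, hwa, hwb, mul_swap_apply_of_ne_of_ne hea heb, Finset.mem_Ioo]
  rcases hea.lt_or_gt with hea | hea <;> rcases heb.lt_or_gt with heb | heb <;>
    simp only [hea, heb, hea.not_gt, heb.not_gt, true_and, false_and, and_true, if_false] <;>
    split_ifs <;> omega

theorem invCount_mul_swap (ha : 1 ≤ a) (hab : a < b) (hbN : b ≤ N) (hlt : w a < w b) :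
    invCount N (w * Equiv.swap a b) =
      invCount N w + 2 * {e ∈ Finset.Ioo a b | w e ∈ Finset.Ioo (w a) (w b)}.card + 1 := by
  set T := ((Finset.Icc 1 N).erase a).erase b with hT
  have haT : a ∉ T := by simp [hT]
  have hbT : b ∉ T := by simp [hT]
  have hins : Finset.Icc 1 N = insert a (insert b T) := by
    ext x
    simp only [hT, Finset.mem_insert, Finset.mem_erase, Finset.mem_Icc]
    omega
  have hbetween : {e ∈ Finset.Ioo a b | w e ∈ Finset.Ioo (w a) (w b)} =
      {e ∈ T | e ∈ Finset.Ioo a b ∧ w e ∈ Finset.Ioo (w a) (w b)} := by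
    ext e
    simp only [hT, Finset.mem_filter, Finset.mem_erase, Finset.mem_Icc, Finset.mem_Ioo]
    omega
  have hswap {e : ℕ} (he : e ∈ T) : (w * Equiv.swap a b) e = w e :=
    mul_swap_apply_of_ne_of_ne (ne_of_mem_of_not_mem he haT) (ne_of_mem_of_not_mem he hbT)
  have hinner : ∑ i ∈ T, ∑ j ∈ T, invIndicator (w * Equiv.swap a b) i j =
      ∑ i ∈ T, ∑ j ∈ T, invIndicator w i j :=
    Finset.sum_congr rfl fun i hi => Finset.sum_congr rfl fun j hj => by
      rw [invIndicator, invIndicator, hswap hi, hswap hj]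
  have hcross := (Finset.sum_congr (rfl : T = T) fun e he => invIndicator_mul_swap_cross hab hlt
    (ne_of_mem_of_not_mem he haT) (ne_of_mem_of_not_mem he hbT)).trans Finset.sum_add_distrib
  rw [← Finset.mul_sum, ← Finset.card_filter, ← hbetween] at hcross
  have hpair : ∀ u : Equiv.Perm ℕ, invIndicator u a a + invIndicator u a b + invIndicator u b a +
      invIndicator u b b = if u b < u a then 1 else 0 := fun u => by
    simp [invIndicator, hab, hab.not_gt]
  rw [invCount, invCount, hins, sum_sum_insert_insert hab.ne haT hbT,
    sum_sum_insert_insert hab.ne haT hbT, hinner, hcross, hpair, hpair, if_neg hlt.not_gt]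
  simp only [Equiv.Perm.mul_apply, Equiv.swap_apply_left, Equiv.swap_apply_right, hlt, if_true]
  ring

namespace IsFPFInvolutionUpTo

/-- The involution `z` exchanges the two coordinates of an inversion, which makes the condition
symmetric in `i` and `j`. -/
theorem invCount_eq_sum (h : IsFPFInvolutionUpTo N z) :
    invCount N z =
      ∑ i ∈ Finset.Icc 1 N, ∑ j ∈ Finset.Icc 1 N, if j < z i ∧ i < z j then 1 else 0 :=
  Finset.sum_congr rfl fun i _ => by
    rw [← sum_comp_perm_of_forall_mem (σ := z) fun i hi => h.apply_mem_Icc hi]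
    simp only [invIndicator, apply_apply_of_mem_IFPFInfty h.mem, and_comm]

theorem two_mul_card_filter_lt_apply (h : IsFPFInvolutionUpTo N z) :
    2 * {i ∈ Finset.Icc 1 N | i < z i}.card = N := by
  have hexchange : ∑ i ∈ Finset.Icc 1 N, (if z i < i then 1 else 0) =
      ∑ i ∈ Finset.Icc 1 N, if i < z i then 1 else 0 := by
    rw [← sum_comp_perm_of_forall_mem (σ := z) fun i hi => h.apply_mem_Icc hi]
    simp only [apply_apply_of_mem_IFPFInfty h.mem]
  have hone (i : ℕ) (hi : i ∈ Finset.Icc 1 N) :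
      ((if i < z i then 1 else 0) + if z i < i then 1 else 0) = 1 := by
    have hne := h.mem.2.1 i (Finset.mem_Icc.1 hi).1
    split_ifs <;> omega
  have hsum := Finset.sum_congr rfl hone
  rw [Finset.sum_add_distrib, hexchange, ← two_mul, ← Finset.card_filter] at hsum
  simpa using hsum

theorem ellFpf_eq_sum (h : IsFPFInvolutionUpTo N z) :
    ellFpf z = ∑ i ∈ Finset.Icc 1 N, ∑ j ∈ Finset.Icc 1 N,
      if j < i ∧ j < z i ∧ i < z j then 1 else 0 := by
  have hDss : Dss z = {x ∈ Finset.Icc 1 N ×ˢ Finset.Icc 1 N |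
      x.2 < x.1 ∧ x.2 < z x.1 ∧ x.1 < z x.2} := by
    ext ⟨i, j⟩
    simp only [Dss, Set.mem_ofPred_eq, Finset.coe_filter, Finset.mem_product, Finset.mem_Icc]
    refine ⟨fun ⟨hj, hjzi, hji, hizj⟩ => ⟨?_, hji, hjzi, hizj⟩, by omega⟩
    have hjN : j ≤ N := by
      by_contra! hNj
      have hle := oneFPF_le j
      rw [← h.tail j hNj] at hle
      omega
    have hzj := h.apply_le hjN
    exact ⟨⟨by omega, by omega⟩, hj, hjN⟩
  rw [ellFpf, hDss, Set.ncard_coe_finset, Finset.card_filter, Finset.sum_product]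

theorem two_mul_invCount (h : IsFPFInvolutionUpTo N z) :
    2 * invCount N z = 4 * ellFpf z + N := by
  have hsplit (i j : ℕ) : (if j < z i ∧ i < z j then 1 else 0) =
      (if j < i ∧ j < z i ∧ i < z j then 1 else 0) + (if i < j ∧ i < z j ∧ j < z i then 1 else 0) +
        if j = i then (if i < z i then 1 else 0) else 0 := by
    rcases lt_trichotomy i j with hij | rfl | hij
    · simp [hij, hij.ne', hij.not_gt, and_comm]
    · simp
    · simp [hij, hij.ne, hij.not_gt]
  have hdiag : ∑ i ∈ Finset.Icc 1 N, ∑ j ∈ Finset.Icc 1 N,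
      (if j = i then (if i < z i then 1 else 0) else 0) = {i ∈ Finset.Icc 1 N | i < z i}.card := by
    rw [Finset.card_filter]
    exact Finset.sum_congr rfl fun i hi => by rw [Finset.sum_ite_eq', if_pos hi]
  have hflip := h.ellFpf_eq_sum
  rw [Finset.sum_comm] at hflip
  have hhalf := h.two_mul_card_filter_lt_apply
  rw [h.invCount_eq_sum]
  simp only [hsplit, Finset.sum_add_distrib, hdiag, ← h.ellFpf_eq_sum, ← hflip]
  omega

end IsFPFInvolutionUpTo

variable {p r : ℕ}

theorem invCount_conj_swap (h : IsFPFInvolutionUpTo N z) (hp : 1 ≤ p) (hpr : p < r) (hrN : r ≤ N)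
    (hlt : z p < z r) :
    invCount N (Equiv.swap p r * z * Equiv.swap p r) = invCount N z +
      2 * {e ∈ Finset.Ioo p r | z e ∈ Finset.Ioo (z p) (z r)}.card +
      2 * {e ∈ Finset.Ioo p r | (Equiv.swap p r * z) e ∈ Finset.Ioo (z p) (z r)}.card + 2 := by
  have hleft := swap_mul_apply_left h.mem hp hpr hlt
  have hright := swap_mul_apply_right h.mem hpr hlt
  have hinv : (z * Equiv.swap p r)⁻¹ = Equiv.swap p r * z := by
    rw [mul_inv_rev, Equiv.swap_inv, inv_eq_of_mem_IFPFInfty h.mem]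
  have hmaps (i : ℕ) (hi : i ∈ Finset.Icc 1 N) : (z * Equiv.swap p r) i ∈ Finset.Icc 1 N := by
    refine h.apply_mem_Icc ?_
    rw [Finset.mem_Icc] at hi ⊢
    rw [Equiv.swap_apply_def]
    split_ifs <;> omega
  rw [invCount_mul_swap hp hpr hrN (by rwa [hleft, hright]), ← hinv, invCount_inv hmaps, hinv,
    invCount_mul_swap hp hpr hrN hlt, hleft, hright]
  ring

theorem ellFpf_conj_swap (hz : z ∈ IFPFInfty) (hp : 1 ≤ p) (hpr : p < r) (hlt : z p < z r) :
    ellFpf (Equiv.swap p r * z * Equiv.swap p r) = ellFpf z + 1 +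
      {e ∈ Finset.Ioo p r | z e ∈ Finset.Ioo (z p) (z r)}.card +
      {e ∈ Finset.Ioo p r | (Equiv.swap p r * z) e ∈ Finset.Ioo (z p) (z r)}.card := by
  obtain ⟨N, hrN, hN⟩ := exists_isFPFInvolutionUpTo hz r
  have hinv := invCount_conj_swap hN hp hpr hrN hlt
  have hell := hN.two_mul_invCount
  have hell' := (hN.conj_swap hp hpr hrN).two_mul_invCount
  omega

theorem ellFpf_conj_swap_lt (hz : z ∈ IFPFInfty) (hzp : z p < p) (hpr : p < r)
    (hlt : z r < z p) : ellFpf (Equiv.swap p r * z * Equiv.swap p r) < ellFpf z := by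
  set v := Equiv.swap p r * z * Equiv.swap p r with hv
  have hp : 1 ≤ p := by omega
  have hvp : v p = z r := by
    rw [hv, Equiv.Perm.mul_apply, Equiv.swap_apply_left, Equiv.Perm.mul_apply,
      Equiv.swap_apply_of_ne_of_ne (by omega) (by omega)]
  have hvr : v r = z p := by
    rw [hv, Equiv.Perm.mul_apply, Equiv.swap_apply_right, Equiv.Perm.mul_apply,
      Equiv.swap_apply_of_ne_of_ne (by omega) (by omega)]
  have hconj : Equiv.swap p r * v * Equiv.swap p r = z := by
    rw [hv, mul_assoc, mul_assoc, Equiv.swap_mul_self, mul_one, Equiv.swap_mul_self_mul]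
  have hell := ellFpf_conj_swap (conj_swap_mem_IFPFInfty hz hp hpr) hp hpr
    (by rwa [← hv, hvp, hvr])
  rw [← hv, hconj] at hell
  omega

/-- The conditions on `r` under which conjugating `z` by `(p, r)` is a cover in the Bruhat order
of fixed-point-free involutions, for `z p < p`. -/
structure IsCoverIndex (z : Equiv.Perm ℕ) (p r : ℕ) : Prop where
  lt : p < r
  apply_lt : z p < z r
  apply_notMem : z r ∉ Finset.Icc p r
  between : ∀ e ∈ Finset.Ioo p r, z e ∉ Finset.Ioo (z p) (z r)

theorem conj_swap_mem_PsiSet (hz : z ∈ IFPFInfty) (hzp : z p < p) (hr : IsCoverIndex z p r) :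
    Equiv.swap p r * z * Equiv.swap p r ∈ PsiSet z p := by
  have hzz := apply_apply_of_mem_IFPFInfty hz
  have hswap (e : ℕ) (he : e ∈ Finset.Ioo p r) : (Equiv.swap p r * z) e = z e := by
    have hnotMem := hr.apply_notMem
    rw [Finset.mem_Ioo] at he
    rw [Finset.mem_Icc] at hnotMem
    refine Equiv.swap_apply_of_ne_of_ne (fun hze => ?_) fun hze => ?_
    · have hee := hzz e
      rw [hze] at hee
      omega
    · have hee := hzz e
      rw [hze] at hee
      omega
  have hempty : {e ∈ Finset.Ioo p r | z e ∈ Finset.Ioo (z p) (z r)} = ∅ :=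
    Finset.filter_eq_empty_iff.2 fun e he => hr.between e he
  have hempty' : {e ∈ Finset.Ioo p r | (Equiv.swap p r * z) e ∈ Finset.Ioo (z p) (z r)} = ∅ :=
    Finset.filter_eq_empty_iff.2 fun e he => by rw [hswap e he]; exact hr.between e he
  refine ⟨r, hr.lt, rfl, ?_⟩
  rw [ellFpf_conj_swap hz (by omega) hr.lt hr.apply_lt, hempty, hempty', Finset.card_empty]

end Lengths

section Tightness

variable {z : Equiv.Perm ℕ} {p r : ℕ} {R : ℕ → ℕ → ℕ}

/-- By supermodularity the two diagonal defects add up to at most `2`, and both are even. -/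
theorem eq_rnk_diag_of_add_one_eq_rnk (hz : z ∈ IFPFInfty) (hR : IsSkewRankTable R)
    (hle : R ≤ rnk z) {i j : ℕ} (hij : i ≤ j) (hempty : ∀ x, i < x → x ≤ j → z x ∉ Finset.Ioc i j)
    (hdefect : R i j + 1 = rnk z i j) : R i i = rnk z i i ∨ R j j = rnk z j j := by
  have hsuper := hR.supermodular hij hij
  have hmodular := rnk_add_rnk_eq_of_forall_notMem_Ioc hij hij hempty
  rw [hR.symm j i] at hsuper
  rw [rnk_comm hz.2.2.1 j i] at hmodular
  obtain ⟨Ri, hRi⟩ := hR.even_diag i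
  obtain ⟨Rj, hRj⟩ := hR.even_diag j
  obtain ⟨ri, hri⟩ := even_rnk_self hz.2.2.1 hz.2.1 i
  obtain ⟨rj, hrj⟩ := even_rnk_self hz.2.2.1 hz.2.1 j
  have hlei : R i i ≤ rnk z i i := hle i i
  have hlej : R j j ≤ rnk z j j := hle j j
  omega

theorem IsCoverIndex.exists_diag_eq_rnk (hr : IsCoverIndex z p r) (hz : z ∈ IFPFInfty)
    (hR : IsSkewRankTable R) (hle : R ≤ rnk z) {i j : ℕ}
    (hi : i ∈ Finset.Ico p r ∩ Finset.Ico (z p) (z r))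
    (hj : j ∈ Finset.Ico p r ∩ Finset.Ico (z p) (z r)) (hdefect : R i j + 1 = rnk z i j) :
    ∃ k ∈ Finset.Ico p r ∩ Finset.Ico (z p) (z r), R k k = rnk z k k := by
  wlog hij : i ≤ j generalizing i j
  · exact this hj hi (by rwa [hR.symm, rnk_comm hz.2.2.1]) (le_of_not_ge hij)
  have hempty (x : ℕ) (hix : i < x) (hxj : x ≤ j) : z x ∉ Finset.Ioc i j := by
    simp only [Finset.mem_inter, Finset.mem_Ico] at hi hj
    have hbetween := hr.between x (Finset.mem_Ioo.2 (by omega))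
    simp only [Finset.mem_Ioo, Finset.mem_Ioc] at hbetween ⊢
    omega
  rcases eq_rnk_diag_of_add_one_eq_rnk hz hR hle hij hempty hdefect with htight | htight
  exacts [⟨i, hi, htight⟩, ⟨j, hj, htight⟩]

theorem IsCoverIndex.exists_eq_rnk (hr : IsCoverIndex z p r) (hz : z ∈ IFPFInfty) (hzp : z p < p)
    (hR : IsSkewRankTable R) (hle : R ≤ rnk z)
    (hconj : ¬ R ≤ rnk (Equiv.swap p r * z * Equiv.swap p r)) :
    ∃ a ∈ Finset.Ico p r, ∃ b ∈ Finset.Ico (z p) (z r), R a b = rnk z a b := by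
  obtain ⟨i, j, hij⟩ : ∃ i j, rnk (Equiv.swap p r * z * Equiv.swap p r) i j < R i j := by
    simpa only [Pi.le_def, not_forall, not_le] using hconj
  have hswap := rnk_conj_swap hz (by omega) hr.lt hr.apply_lt i j
  have hleij : R i j ≤ rnk z i j := hle i j
  by_cases hlower : i ∈ Finset.Ico p r ∧ j ∈ Finset.Ico (z p) (z r) <;>
    by_cases hupper : j ∈ Finset.Ico p r ∧ i ∈ Finset.Ico (z p) (z r) <;>
    simp only [hlower, hupper, if_true, if_false, and_self] at hswap
  · by_cases htight : R i j = rnk z i j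
    · exact ⟨i, hlower.1, j, hlower.2, htight⟩
    · obtain ⟨k, hk, hkk⟩ := hr.exists_diag_eq_rnk hz hR hle
        (Finset.mem_inter.2 ⟨hlower.1, hupper.2⟩) (Finset.mem_inter.2 ⟨hupper.1, hlower.2⟩)
        (by omega)
      rw [Finset.mem_inter] at hk
      exact ⟨k, hk.1, k, hk.2, hkk⟩
  · exact ⟨i, hlower.1, j, hlower.2, by omega⟩
  · exact ⟨j, hupper.1, i, hupper.2, by rw [hR.symm, rnk_comm hz.2.2.1]; omega⟩
  · omega

/-- The first `t ∈ (p, r]` with `z p < z t ≤ z r` gives a cover index, namely `t` itself or `z t`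
when `p < z t < t`. -/
theorem exists_isCoverIndex (hz : z ∈ IFPFInfty) (hzp : z p < p) (hpr : p < r) (hlt : z p < z r) :
    ∃ t ≤ r, IsCoverIndex z p t ∧ (z t ≤ z r ∨ t ≤ z r ∧ z t ≤ r) := by
  have hzz := apply_apply_of_mem_IFPFInfty hz
  obtain ⟨t, ⟨hpt, htr, hlt_zt, hzt_le⟩, hmin⟩ := exists_minimal_of_wellFoundedLT
    (fun t => p < t ∧ t ≤ r ∧ z p < z t ∧ z t ≤ z r) ⟨r, hpr, le_rfl, hlt, le_rfl⟩
  have hbetween (e : ℕ) (he : e ∈ Finset.Ioo p t) : z e ∉ Finset.Ioo (z p) (z t) := by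
    simp only [Finset.mem_Ioo] at he ⊢
    intro hze
    have := hmin (y := e) ⟨he.1, by omega, hze.1, by omega⟩ he.2.le
    omega
  by_cases hmem : z t ∈ Finset.Icc p t
  · have htp : z t ≠ p := fun h => by
      have htt := hzz t
      rw [h] at htt
      omega
    have htt : z t ≠ t := hz.2.1 t (by omega)
    rw [Finset.mem_Icc] at hmem
    refine ⟨z t, by omega, ⟨by omega, by rw [hzz]; omega, ?_, fun e he hze => ?_⟩, Or.inr ?_⟩
    · rw [hzz, Finset.mem_Icc]
      omega
    · rw [hzz] at hze
      simp only [Finset.mem_Ioo] at he hze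
      have hze_lt := hbetween e (Finset.mem_Ioo.2 (by omega))
      have hee := hbetween (z e)
      simp only [Finset.mem_Ioo, hzz] at hze_lt hee
      omega
    · rw [hzz]
      exact ⟨hzt_le, htr⟩
  · exact ⟨t, htr, ⟨hpt, hlt_zt, hmem, hbetween⟩, Or.inl hzt_le⟩

theorem exists_eq_rnk_of_forall_mem_PsiSet (hz : z ∈ IFPFInfty) (hzp : z p < p)
    (hR : IsSkewRankTable R) (hle : R ≤ rnk z) (hPsi : ∀ v ∈ PsiSet z p, ¬ R ≤ rnk v)
    (hpr : p < r) (hlt : z p < z r) :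
    ∃ a ∈ Finset.Ico p r, ∃ b ∈ Finset.Ico (z p) (z r), R a b = rnk z a b := by
  obtain ⟨t, htr, ht, hbound⟩ := exists_isCoverIndex hz hzp hpr hlt
  obtain ⟨a, ha, b, hb, htight⟩ :=
    ht.exists_eq_rnk hz hzp hR hle (hPsi _ (conj_swap_mem_PsiSet hz hzp ht))
  simp only [Finset.mem_Ico] at ha hb ⊢
  rcases hbound with hbound | hbound
  · exact ⟨a, by omega, b, by omega, htight⟩
  by_cases hpb : p ≤ b
  · exact ⟨b, by omega, a, by omega, by rw [hR.symm, rnk_comm hz.2.2.1, htight]⟩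
  · exact ⟨a, by omega, b, by omega, htight⟩

theorem eq_rnk_of_forall_apply_mem {a d b : ℕ} (hR : IsSkewRankTable R) (hle : R ≤ rnk z)
    (hfull : ∀ x, a < x → x ≤ a + d → z x ∈ Finset.Icc 1 b)
    (htight : R (a + d) b = rnk z (a + d) b) : R a b = rnk z a b := by
  have hadd := hR.add_rows_le a d b
  have hrnk := rnk_add_left_of_forall_mem hfull
  have hleab : R a b ≤ rnk z a b := hle a b
  omega

theorem exists_gt_apply_gt (hz : z ∈ IFPFInfty) (m : ℕ) : ∃ r, m < r ∧ m < z r := by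
  obtain ⟨N, hmN, hN⟩ := exists_isFPFInvolutionUpTo hz m
  have hlt := lt_oneFPF hN.even N.lt_add_one
  rw [← hN.tail _ N.lt_add_one] at hlt
  exact ⟨N + 1, by omega, by omega⟩

theorem exists_eq_rnk_row (hz : z ∈ IFPFInfty) (hzp : z p < p) (hR : IsSkewRankTable R)
    (hle : R ≤ rnk z)
    (htight : ∀ r, p < r → z p < z r →
      ∃ a ∈ Finset.Ico p r, ∃ b ∈ Finset.Ico (z p) (z r), R a b = rnk z a b) :
    ∃ b, z p ≤ b ∧ R p b = rnk z p b := by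
  obtain ⟨s, hps, hlt_zs⟩ := exists_gt_apply_gt hz p
  obtain ⟨r, ⟨hpr, hlt⟩, hmin⟩ := exists_minimal_of_wellFoundedLT
    (fun r => p < r ∧ z p < z r) ⟨s, hps, hzp.trans hlt_zs⟩
  obtain ⟨a, ha, b, hb, hab⟩ := htight r hpr hlt
  rw [Finset.mem_Ico] at ha hb
  obtain ⟨d, rfl⟩ := Nat.exists_eq_add_of_le ha.1
  refine ⟨b, hb.1, eq_rnk_of_forall_apply_mem hR hle (fun x hpx hxd => ?_) hab⟩
  have hzx := one_le_apply_of_mem_IFPFInfty hz (show 1 ≤ x by omega)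
  rw [Finset.mem_Icc]
  by_contra hgt
  have := hmin (y := x) ⟨hpx, by omega⟩ (by omega)
  omega

theorem exists_lt_eq_rnk_row {β : ℕ} (hR : IsSkewRankTable R) (hle : R ≤ rnk z)
    (htight : ∀ r, p < r → z p < z r →
      ∃ a ∈ Finset.Ico p r, ∃ b ∈ Finset.Ico (z p) (z r), R a b = rnk z a b)
    (hβ : R p β = rnk z p β) (hex : ∃ r, p < r ∧ z r ∈ Finset.Ioc (z p) β) :
    ∃ b < β, z p ≤ b ∧ R p b = rnk z p b := by
  obtain ⟨r, ⟨hpr, hzr⟩, hmin⟩ := exists_minimal_of_wellFoundedLT _ hex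
  rw [Finset.mem_Ioc] at hzr
  obtain ⟨a, ha, b, hb, hab⟩ := htight r hpr hzr.1
  rw [Finset.mem_Ico] at ha hb
  have hempty (x : ℕ) (hpx : p < x) (hxa : x ≤ a) : z x ∉ Finset.Ioc b β := fun hzx => by
    rw [Finset.mem_Ioc] at hzx
    have := hmin (y := x) ⟨hpx, Finset.mem_Ioc.2 (by omega)⟩ (by omega)
    omega
  have hbβ : b ≤ β := by omega
  have hsuper := hR.supermodular ha.1 hbβ
  have hmodular := rnk_add_rnk_eq_of_forall_notMem_Ioc ha.1 hbβ hempty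
  have hleaβ : R a β ≤ rnk z a β := hle a β
  have hlepb : R p b ≤ rnk z p b := hle p b
  exact ⟨b, by omega, hb.1, by omega⟩

theorem eq_rnk_apply_of_forall_exists_eq_rnk (hz : z ∈ IFPFInfty) (hzp : z p < p)
    (hR : IsSkewRankTable R) (hle : R ≤ rnk z)
    (htight : ∀ r, p < r → z p < z r →
      ∃ a ∈ Finset.Ico p r, ∃ b ∈ Finset.Ico (z p) (z r), R a b = rnk z a b) :
    R p (z p) = rnk z p (z p) := by
  have hzz := apply_apply_of_mem_IFPFInfty hz
  obtain ⟨β, ⟨hzpβ, hβ⟩, hmin⟩ :=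
    exists_minimal_of_wellFoundedLT _ (exists_eq_rnk_row hz hzp hR hle htight)
  have hnone : ¬ ∃ r, p < r ∧ z r ∈ Finset.Ioc (z p) β := fun hex => by
    obtain ⟨b, hbβ, hb⟩ := exists_lt_eq_rnk_row hR hle htight hβ hex
    exact hbβ.not_ge (hmin hb hbβ.le)
  obtain ⟨d, rfl⟩ := Nat.exists_eq_add_of_le hzpβ
  rw [hR.symm, rnk_comm hz.2.2.1] at hβ ⊢
  refine eq_rnk_of_forall_apply_mem hR hle (fun x hx hxd => Finset.mem_Icc.2 ⟨?_, ?_⟩) hβ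
  · exact one_le_apply_of_mem_IFPFInfty hz (by omega)
  · by_contra! hpzx
    exact hnone ⟨z x, hpzx, by rw [hzz]; exact Finset.mem_Ioc.2 ⟨hx, hxd⟩⟩

theorem exists_mem_PsiSet_le_rnk_iff (hz : z ∈ IFPFInfty) (hzp : z p < p)
    (hR : IsSkewRankTable R) :
    (∃ v ∈ PsiSet z p, R ≤ rnk v) ↔ R ≤ rnk z ∧ R p (z p) < rnk z p (z p) := by
  constructor
  · rintro ⟨_, ⟨r, hpr, rfl, hell⟩, hle⟩
    have hlt : z p < z r := by
      refine (z.injective.ne hpr.ne).lt_or_gt.resolve_right fun hgt => ?_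
      have := ellFpf_conj_swap_lt hz hzp hpr hgt
      omega
    have hswap := rnk_conj_swap hz (by omega) hpr hlt
    refine ⟨fun i j => (hle i j).trans ?_, (hle p (z p)).trans_lt ?_⟩
    · rw [hswap i j, add_assoc]
      exact Nat.le_add_right _ _
    · rw [hswap p (z p), if_pos (And.intro (Finset.left_mem_Ico.2 hpr) (Finset.left_mem_Ico.2 hlt))]
      exact Nat.lt_add_one_of_le (Nat.le_add_right _ _)
  · rintro ⟨hle, hlt⟩
    by_contra! hPsi
    exact hlt.ne (eq_rnk_apply_of_forall_exists_eq_rnk hz hzp hR hle fun r =>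
      exists_eq_rnk_of_forall_mem_PsiSet hz hzp hR hle hPsi)

end Tightness

section SkewMatrixSchubertVarieties

theorem mem_Xss_iff {K : Type*} [Field K] {n : ℕ} {z : Equiv.Perm ℕ}
    {A : Matrix (Fin n) (Fin n) K} : A ∈ Xss K n z ↔ A ∈ MatSS K n ∧ nwRank A ≤ rnk z := by
  refine and_congr_right fun _ => ⟨fun h i j => ?_, fun h i j hi hj _ _ => ?_⟩
  · rcases Nat.eq_zero_or_pos (min i n) with hi | hi
    · rw [← nwRank_min, hi, nwRank_eq_zero_iff.2 (by omega)]
      exact Nat.zero_le _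
    rcases Nat.eq_zero_or_pos (min j n) with hj | hj
    · rw [← nwRank_min, hj, nwRank_eq_zero_iff.2 (by omega)]
      exact Nat.zero_le _
    rw [← nwRank_min, nwRank_eq_rank_submatrix_castLE A (min_le_right i n) (min_le_right j n)]
    exact (h _ _ _ _ hi hj).trans (rnk_mono z (min_le_left i n) (min_le_left j n))
  · rw [← nwRank_eq_rank_submatrix_castLE]
    exact h i j

theorem apply_eq_and_rnk_eq_one_of_isOuterCorner {z : Equiv.Perm ℕ} {p q : ℕ}
    (h : IsOuterCorner z p q) : z p = q ∧ rnk z p q = 1 := by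
  obtain ⟨hp, hq, hdom, hup, hleft⟩ := h
  have hrow : rnk z (p - 1) q = 0 := by
    rcases hup with rfl | hup
    exacts [rnk_zero_left z q, hup.2.2]
  have hcol : rnk z p (q - 1) = 0 := by
    rcases hleft with rfl | hleft
    exacts [by rw [← rnk_inv, rnk_zero_left], hleft.2.2]
  have hne : rnk z p q ≠ 0 := fun h0 => hdom ⟨hp, hq, h0⟩
  obtain ⟨p, rfl⟩ := Nat.exists_eq_add_of_le' hp
  rw [rnk_succ_left] at hne hcol ⊢
  rw [Nat.add_sub_cancel] at hrow
  have hmem : z (p + 1) ∈ Finset.Icc 1 q := by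
    by_contra hnot
    rw [hrow, if_neg hnot] at hne
    exact hne rfl
  have hnot : z (p + 1) ∉ Finset.Icc 1 (q - 1) := fun hmem' => by
    rw [if_pos hmem'] at hcol
    omega
  rw [Finset.mem_Icc] at hnot
  refine ⟨?_, by rw [hrow, if_pos hmem]⟩
  rw [Finset.mem_Icc] at hmem
  omega

theorem forall_apply_eq_zero_iff_nwRank_eq_zero {K : Type*} [Field K] {n p q : ℕ}
    {A : Matrix (Fin n) (Fin n) K} (hA : A ∈ MatSS K n) :
    (∀ a b : Fin n,
        (((a : ℕ) + 1 ≤ p ∧ (b : ℕ) + 1 ≤ q) ∨ ((a : ℕ) + 1 ≤ q ∧ (b : ℕ) + 1 ≤ p)) →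
        A a b = 0) ↔ nwRank A p q = 0 := by
  have hskew (a b : Fin n) : A a b = -A b a := Matrix.ext_iff.2 hA.1 b a
  rw [nwRank_eq_zero_iff]
  refine ⟨fun h a b ha hb => h a b (Or.inl ⟨ha, hb⟩), fun h a b hab => ?_⟩
  rcases hab with ⟨ha, hb⟩ | ⟨ha, hb⟩
  · exact h a b ha hb
  · rw [hskew, h b a hb ha, neg_zero]

theorem statement16_general (K : Type*) [Field K] (n : ℕ) (z : Equiv.Perm ℕ)
    (hz : z ∈ IFPFInfty) (p q : ℕ) (hoc : IsOuterCorner z p q) (hqp : q < p) :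
    Xss K n z ∩ {A | A ∈ MatSS K n ∧ ∀ a b : Fin n,
        (((a : ℕ) + 1 ≤ p ∧ (b : ℕ) + 1 ≤ q) ∨ ((a : ℕ) + 1 ≤ q ∧ (b : ℕ) + 1 ≤ p)) →
        A a b = 0} =
      ⋃ v ∈ PsiSet z p, Xss K n v := by
  obtain ⟨rfl, hone⟩ := apply_eq_and_rnk_eq_one_of_isOuterCorner hoc
  ext A
  by_cases hA : A ∈ MatSS K n
  · have hPsi := exists_mem_PsiSet_le_rnk_iff hz hqp (isSkewRankTable_nwRank hA)
    rw [hone, Nat.lt_one_iff] at hPsi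
    simp only [Set.mem_inter_iff, Set.mem_ofPred_eq, Set.mem_iUnion, exists_prop, mem_Xss_iff, hA,
      true_and, forall_apply_eq_zero_iff_nwRank_eq_zero hA, hPsi]
  · simp only [Set.mem_inter_iff, Set.mem_ofPred_eq, Set.mem_iUnion, exists_prop, mem_Xss_iff, hA,
      false_and, and_false, exists_false]

end SkewMatrixSchubertVarieties

/-- Let `z ∈ FPF_n(I_n)` and let `(p,q)` be an outer corner of
`dom(z)` with `n ≥ p > q`. With
`X^ss_{p,q} = {A ∈ Mat^ss_n(K) : A_{ij} = 0 for (i,j) ∈ ([p] × [q]) ∪ ([q] × [p])}`,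
one has `X^ss_z ∩ X^ss_{p,q} = ⋃_{v ∈ Ψ(z,p)} X^ss_v`. -/
theorem statement16 (K : Type*) [Field K] [IsAlgClosed K] (n : ℕ) (hn : 1 ≤ n)
    (z : Equiv.Perm ℕ) (hz : z ∈ FPFIn n) (p q : ℕ) (hoc : IsOuterCorner z p q)
    (hpn : p ≤ n) (hqp : q < p) :
    Xss K n z ∩ {A | A ∈ MatSS K n ∧ ∀ a b : Fin n,
        (((a : ℕ) + 1 ≤ p ∧ (b : ℕ) + 1 ≤ q) ∨ ((a : ℕ) + 1 ≤ q ∧ (b : ℕ) + 1 ≤ p)) →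
        A a b = 0} =
      ⋃ v ∈ PsiSet z p, Xss K n v := by
  exact statement16_general K n z hz.1 p q hoc hqp

end Paper
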